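/- arXiv:2211.12880 — 5 statements merged into one kernel-verified Lean document; each statement's English description precedes it below -/
import Mathlib

section
/- Let λ_1, ..., λ_d be real numbers (d ≥ 1) and let Δ = {x ∈ ℝ^d : x_i ≥ 0 for all i, ∑_i x_i = 1} be the probability simplex. Consider the extended-real-valued function F(x) = ∑_{i=1}^d λ_i x_i − ∑_{i=1}^d log x_i on Δ (with F(x) = +∞ if some x_i = 0). Then F attains its minimum over Δ at a unique point x*, given by x*_i = 1/(θ + λ_i) where θ is the unique real number with θ > −min_i λ_i and ∑_{i=1}^d 1/(θ + λ_i) = 1. -/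
/-! With `a i = θ + lam i > 0` and `∑ i, (a i)⁻¹ = 1`, every positive `x` of total mass `1` satisfies
`F x - F a⁻¹ = ∑ i, (a i * x i - 1 - log (a i * x i))`, because `θ * ∑ i, x i` is the same constant
for `x` and for `a⁻¹`. Each summand is nonnegative by `log t ≤ t - 1`, and vanishes only for
`a i * x i = 1`; this gives both minimality and uniqueness of the minimizer (`logBarrier_gap`).
The multiplier `θ` exists by the intermediate value theorem on `[1 - m, d - m]`, where
`m = min lam` (`exists_multiplier`), and is unique because `θ ↦ ∑ i, (θ + lam i)⁻¹` is strictly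
decreasing on `θ > -m`. -/


open Set

/-- The extended-real-valued logarithmic-barrier objective on the simplex:
`F(x) = ∑ i, λ_i x_i - ∑ i, log x_i`, equal to `+∞` if some `x_i = 0`. -/
noncomputable def logBarrierObj (d : ℕ) (lam : Fin d → ℝ) (x : Fin d → ℝ) : EReal :=
  if ∀ i, 0 < x i then
    ((∑ i, lam i * x i - ∑ i, Real.log (x i) : ℝ) : EReal)
  else ⊤

/-- At `θ = 1 - m` the smallest `lam i` alone contributes `1`, and at `θ = d - m` each of the `d`
terms is at most `1 / d`, so the value `1` is attained in between. -/
lemma exists_multiplier (d : ℕ) (hd : 0 < d) (lam : Fin d → ℝ) :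
    ∃ θ : ℝ, -(⨅ i, lam i) < θ ∧ ∑ i, (θ + lam i)⁻¹ = 1 := by
  have : Nonempty (Fin d) := ⟨⟨0, hd⟩⟩
  have hm : ∀ i, (⨅ i, lam i) ≤ lam i := fun i => ciInf_le (Set.finite_range lam).bddBelow i
  obtain ⟨j, hj⟩ := exists_eq_ciInf_of_finite (f := lam)
  set m := ⨅ i, lam i
  have hd1 : (1 : ℝ) ≤ d := by exact_mod_cast hd
  have hcont : ContinuousOn (fun θ : ℝ => ∑ i, (θ + lam i)⁻¹) (Icc (1 - m) (d - m)) := by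
    refine continuousOn_finsetSum _ fun i _ => ContinuousOn.inv₀ (by fun_prop) ?_
    intro θ hθ
    have := hm i
    have := hθ.1
    exact ne_of_gt (by linarith)
  have hmem : (1 : ℝ) ∈ Icc (∑ i, ((d - m : ℝ) + lam i)⁻¹) (∑ i, ((1 - m : ℝ) + lam i)⁻¹) := by
    constructor
    · calc ∑ i, ((d - m : ℝ) + lam i)⁻¹ ≤ ∑ _i : Fin d, (d : ℝ)⁻¹ := by
            refine Finset.sum_le_sum fun i _ => inv_anti₀ (by linarith) ?_
            have := hm i
            linarith
        _ = 1 := by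
            have : (d : ℝ) ≠ 0 := by linarith
            simp [this]
    · have h := Finset.single_le_sum (f := fun i => ((1 - m : ℝ) + lam i)⁻¹) (s := Finset.univ)
        (fun i _ => inv_nonneg.2 (by have := hm i; linarith)) (Finset.mem_univ j)
      simpa [hj] using h
  obtain ⟨θ, hθ, h⟩ := intermediate_value_Icc' (by linarith) hcont hmem
  exact ⟨θ, by linarith [hθ.1], h⟩

/-- The excess of the objective over its value at `fun i => (θ + lam i)⁻¹`, on the open simplex. -/
lemma logBarrier_gap {d : ℕ} {lam : Fin d → ℝ} {θ : ℝ} (ha : ∀ i, 0 < θ + lam i)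
    (hθ : ∑ i, (θ + lam i)⁻¹ = 1) {x : Fin d → ℝ} (hx : ∀ i, 0 < x i) (hx1 : ∑ i, x i = 1) :
    (∑ i, lam i * x i - ∑ i, Real.log (x i)) -
      (∑ i, lam i * (θ + lam i)⁻¹ - ∑ i, Real.log (θ + lam i)⁻¹) =
    ∑ i, ((θ + lam i) * x i - 1 - Real.log ((θ + lam i) * x i)) := by
  have h : ∀ i, (θ + lam i) * x i - 1 - Real.log ((θ + lam i) * x i) =
      (lam i * x i - Real.log (x i)) - (lam i * (θ + lam i)⁻¹ - Real.log (θ + lam i)⁻¹) +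
        θ * (x i - (θ + lam i)⁻¹) := by
    intro i
    rw [Real.log_mul (ha i).ne' (hx i).ne', Real.log_inv]
    linear_combination mul_inv_cancel₀ (ha i).ne'
  rw [Finset.sum_congr rfl fun i _ => h i]
  simp only [Finset.sum_add_distrib, Finset.sum_sub_distrib, ← Finset.mul_sum, hx1, hθ]
  ring

/-- `F` attains its minimum over the probability simplex at a
unique point `x*`, given by `x*_i = 1/(θ + λ_i)` where `θ` is the unique real
with `θ > -min_i λ_i` and `∑ i, 1/(θ + λ_i) = 1`. -/
theorem logBarrier_projection (d : ℕ) (hd : 0 < d) (lam : Fin d → ℝ) :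
    ∃ θ : ℝ, -(⨅ i, lam i) < θ ∧ ∑ i, (θ + lam i)⁻¹ = 1 ∧
      (∀ θ' : ℝ, -(⨅ i, lam i) < θ' → ∑ i, (θ' + lam i)⁻¹ = 1 → θ' = θ) ∧
      (fun i => (θ + lam i)⁻¹) ∈ stdSimplex ℝ (Fin d) ∧
      (∀ x ∈ stdSimplex ℝ (Fin d),
        logBarrierObj d lam (fun i => (θ + lam i)⁻¹) ≤ logBarrierObj d lam x) ∧
      (∀ y ∈ stdSimplex ℝ (Fin d),
        (∀ x ∈ stdSimplex ℝ (Fin d), logBarrierObj d lam y ≤ logBarrierObj d lam x) →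
        y = fun i => (θ + lam i)⁻¹) := by
  have : Nonempty (Fin d) := ⟨⟨0, hd⟩⟩
  have hpos : ∀ t : ℝ, -(⨅ i, lam i) < t → ∀ i, 0 < t + lam i := fun t ht i => by
    have := ciInf_le (Set.finite_range lam).bddBelow i
    linarith
  obtain ⟨θ, hθ, hsum⟩ := exists_multiplier d hd lam
  have ha := hpos θ hθ
  have hinv : ∀ i, 0 < (θ + lam i)⁻¹ := fun i => inv_pos.2 (ha i)
  have hmem : (fun i => (θ + lam i)⁻¹) ∈ stdSimplex ℝ (Fin d) := ⟨fun i => (hinv i).le, hsum⟩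
  have hanti : ∀ s t : ℝ, -(⨅ i, lam i) < s → s < t →
      ∑ i, (t + lam i)⁻¹ < ∑ i, (s + lam i)⁻¹ := fun s t hs hst =>
    Finset.sum_lt_sum_of_nonempty Finset.univ_nonempty fun i _ =>
      inv_strictAnti₀ (hpos s hs i) (by linarith)
  have hterm : ∀ x : Fin d → ℝ, (∀ i, 0 < x i) → ∀ i,
      0 ≤ (θ + lam i) * x i - 1 - Real.log ((θ + lam i) * x i) := fun x hx i => by
    linarith [Real.log_le_sub_one_of_pos (mul_pos (ha i) (hx i))]
  refine ⟨θ, hθ, hsum, ?_, hmem, ?_, ?_⟩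
  · intro θ' hθ' hsum'
    rcases lt_trichotomy θ' θ with h | h | h
    · linarith [hanti _ _ hθ' h]
    · exact h
    · linarith [hanti _ _ hθ h]
  · intro x hx
    by_cases hxp : ∀ i, 0 < x i
    · rw [logBarrierObj, logBarrierObj, if_pos hinv, if_pos hxp, EReal.coe_le_coe_iff]
      have h := logBarrier_gap ha hsum hxp hx.2
      linarith [Finset.sum_nonneg fun i (_ : i ∈ Finset.univ) => hterm x hxp i]
    · rw [logBarrierObj, logBarrierObj, if_neg hxp]
      exact le_top
  · intro y hy hmin
    have hle := hmin _ hmem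
    by_cases hyp : ∀ i, 0 < y i
    · rw [logBarrierObj, logBarrierObj, if_pos hinv, if_pos hyp, EReal.coe_le_coe_iff] at hle
      have h := logBarrier_gap ha hsum hyp hy.2
      have hnn := Finset.sum_nonneg fun i (_ : i ∈ Finset.univ) => hterm y hyp i
      have h0 := (Finset.sum_eq_zero_iff_of_nonneg fun i _ => hterm y hyp i).1
        (le_antisymm (by linarith) hnn)
      funext i
      -- `log t = t - 1` forces `t = 1`, here for `t = (θ + lam i) * y i`.
      have h1 : (θ + lam i) * y i = 1 := by
        by_contra hne
        linarith [Real.log_lt_sub_one_of_pos (mul_pos (ha i) (hyp i)) hne,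
          h0 i (Finset.mem_univ i)]
      exact eq_inv_of_mul_eq_one_right h1
    · rw [logBarrierObj, logBarrierObj, if_neg hyp, if_pos hinv] at hle
      exact absurd (top_le_iff.1 hle) (EReal.coe_ne_top _)
end

section
/- Let M be a d×d Hermitian complex matrix and let 𝒟 denote the set of d×d density matrices. Consider the extended-real-valued function G(ρ) = tr(Mρ) − log det ρ on 𝒟 (with G(ρ) = +∞ whenever ρ is singular; note tr(Mρ) is real since M and ρ are Hermitian). Then G attains its minimum over 𝒟 at a unique point, namely ρ* = (M + θI)⁻¹, where θ is the unique real number with θ > −λ_min(M) and tr((M + θI)⁻¹) = 1. -/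
/-!
Write `A = M + θI`, which is positive definite exactly for `θ > -λ_min(M)`. In an eigenbasis of `M`,
`tr A⁻¹ = ∑ᵢ (λᵢ + θ)⁻¹`; this is continuous and strictly decreasing in `θ`, at least `1` at
`θ = 1 - λ_min` and at most `1` at `θ = d - λ_min`, so it takes the value `1` exactly once.

On matrices of trace one, `tr(Mρ) = tr(Aρ) - θ`, so minimality reduces to the matrix inequality
`tr(Aρ) - log det ρ ≥ d + log det A` for positive definite `A` and `ρ`, with equality only at
`ρ = A⁻¹` (`burg_lower_bound`, `burg_lower_bound_eq`). To see it, factor `A = B* B`: the matrix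
`X = B ρ B*` is positive definite with `tr X = tr(Aρ)` and `det X = det A · det ρ`, and the claim
becomes `log det X ≤ tr X - d`, which is `log μ ≤ μ - 1` summed over the eigenvalues `μ` of `X`.
Equality forces all `μ = 1`, hence `X = 1` and `ρ = A⁻¹`.
-/

open Matrix
open scoped ComplexOrder

/-- The set of `d × d` density matrices. -/
def densityMatrices (d : ℕ) : Set (Matrix (Fin d) (Fin d) ℂ) :=
  {ρ | ρ.PosSemidef ∧ ρ.trace = 1}

open Classical in
/-- The extended-real-valued objective `G(ρ) = tr(Mρ) - log det ρ`, equal to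
`+∞` whenever `ρ` is singular. -/
noncomputable def burgLinObj (d : ℕ) (M : Matrix (Fin d) (Fin d) ℂ)
    (ρ : Matrix (Fin d) (Fin d) ℂ) : EReal :=
  if ρ.det = 0 then ⊤
  else ((((M * ρ).trace).re - Real.log ((ρ.det).re) : ℝ) : EReal)

/-! ### The trace-log-determinant inequality -/

lemma posDef_re_det {d : ℕ} {X : Matrix (Fin d) (Fin d) ℂ} (hX : X.PosDef) :
    X.det.re = ∏ i, hX.1.eigenvalues i := by
  rw [hX.1.det_eq_prod_eigenvalues]
  norm_cast

lemma posDef_re_trace {d : ℕ} {X : Matrix (Fin d) (Fin d) ℂ} (hX : X.PosDef) :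
    X.trace.re = ∑ i, hX.1.eigenvalues i := by
  rw [hX.1.trace_eq_sum_eigenvalues]
  norm_cast

lemma posDef_re_det_pos {d : ℕ} {X : Matrix (Fin d) (Fin d) ℂ} (hX : X.PosDef) :
    0 < X.det.re := by
  rw [posDef_re_det hX]
  exact Finset.prod_pos fun i _ => hX.eigenvalues_pos i

lemma log_det_le {d : ℕ} {X : Matrix (Fin d) (Fin d) ℂ} (hX : X.PosDef) :
    Real.log X.det.re ≤ X.trace.re - d := by
  rw [posDef_re_det hX, posDef_re_trace hX,
    Real.log_prod fun i _ => (hX.eigenvalues_pos i).ne']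
  calc _ ≤ ∑ i, (hX.1.eigenvalues i - 1) :=
        Finset.sum_le_sum fun i _ => Real.log_le_sub_one_of_pos (hX.eigenvalues_pos i)
    _ = _ := by simp [Finset.sum_sub_distrib]

lemma eq_one_of_log_det_eq {d : ℕ} {X : Matrix (Fin d) (Fin d) ℂ} (hX : X.PosDef)
    (h : Real.log X.det.re = X.trace.re - d) : X = 1 := by
  rw [posDef_re_det hX, posDef_re_trace hX,
    Real.log_prod fun i _ => (hX.eigenvalues_pos i).ne'] at h
  have h1 : ∑ i, Real.log (hX.1.eigenvalues i) = ∑ i, (hX.1.eigenvalues i - 1) := by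
    rw [h]; simp [Finset.sum_sub_distrib]
  rw [Finset.sum_eq_sum_iff_of_le
    fun i _ => Real.log_le_sub_one_of_pos (hX.eigenvalues_pos i)] at h1
  have h2 : ∀ i, hX.1.eigenvalues i = 1 := by
    intro i
    by_contra hne
    exact (Real.log_lt_sub_one_of_pos (hX.eigenvalues_pos i) hne).ne (h1 i (Finset.mem_univ i))
  rw [hX.1.spectral_theorem]
  have h3 : (RCLike.ofReal ∘ hX.1.eigenvalues : Fin d → ℂ) = fun _ => 1 := by
    funext i; simp [h2 i]
  rw [h3, Matrix.diagonal_one, map_one]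

/-- The congruence `X = B ρ B*`, with `A = B* B`, that turns statements about the pair `(A, ρ)` into
statements about the single positive definite matrix `X`. -/
lemma exists_congruence {d : ℕ} {A ρ : Matrix (Fin d) (Fin d) ℂ} (hA : A.PosDef)
    (hρ : ρ.PosDef) : ∃ X : Matrix (Fin d) (Fin d) ℂ, X.PosDef ∧ X.trace = (A * ρ).trace ∧
      X.det.re = A.det.re * ρ.det.re ∧ (X = 1 → ρ = A⁻¹) := by
  obtain ⟨B, hB⟩ : ∃ B : Matrix (Fin d) (Fin d) ℂ, A = Bᴴ * B := by
    open scoped MatrixOrder Matrix.Norms.L2Operator in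
    exact CStarAlgebra.nonneg_iff_eq_star_mul_self.mp hA.posSemidef.nonneg
  have hAu : IsUnit A := hA.isUnit
  have hBdet : IsUnit B.det := by
    have := (Matrix.isUnit_iff_isUnit_det A).1 hAu
    rw [hB, Matrix.det_mul] at this
    exact isUnit_of_mul_isUnit_right this
  have hBu : IsUnit B := (Matrix.isUnit_iff_isUnit_det B).2 hBdet
  have hdet : (B * ρ * Bᴴ).det = A.det * ρ.det := by
    rw [hB]; simp only [Matrix.det_mul]; ring
  refine ⟨B * ρ * Bᴴ, hρ.mul_mul_conjTranspose_same (Matrix.vecMul_injective_iff_isUnit.2 hBu),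
    ?_, ?_, ?_⟩
  · rw [hB, Matrix.trace_mul_comm, Matrix.mul_assoc]
  · have him : ρ.det.im = 0 := ((Complex.lt_def.1 hρ.det_pos).2).symm
    rw [hdet, Complex.mul_re, him]; simp
  · intro h
    -- `B (ρ B*) = 1` commutes to `(ρ B*) B = 1`, that is `ρ A = 1`.
    have h1 : B * (ρ * Bᴴ) = 1 := by rw [← Matrix.mul_assoc]; exact h
    have h2 : ρ * A = 1 := by rw [hB, ← Matrix.mul_assoc]; exact mul_eq_one_comm.1 h1
    exact (Matrix.inv_eq_left_inv h2).symm

lemma burg_lower_bound {d : ℕ} {A ρ : Matrix (Fin d) (Fin d) ℂ} (hA : A.PosDef)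
    (hρ : ρ.PosDef) :
    d + Real.log A.det.re ≤ (A * ρ).trace.re - Real.log ρ.det.re := by
  obtain ⟨X, hX, ht, hdet, -⟩ := exists_congruence hA hρ
  have := log_det_le hX
  rw [ht, hdet, Real.log_mul (posDef_re_det_pos hA).ne' (posDef_re_det_pos hρ).ne'] at this
  linarith

lemma burg_lower_bound_eq {d : ℕ} {A ρ : Matrix (Fin d) (Fin d) ℂ} (hA : A.PosDef)
    (hρ : ρ.PosDef)
    (h : (A * ρ).trace.re - Real.log ρ.det.re ≤ d + Real.log A.det.re) : ρ = A⁻¹ := by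
  obtain ⟨X, hX, ht, hdet, himp⟩ := exists_congruence hA hρ
  refine himp (eq_one_of_log_det_eq hX (le_antisymm (log_det_le hX) ?_))
  rw [ht, hdet, Real.log_mul (posDef_re_det_pos hA).ne' (posDef_re_det_pos hρ).ne']
  linarith

lemma burg_at_inv {d : ℕ} {A : Matrix (Fin d) (Fin d) ℂ} (hA : A.PosDef) :
    (A * A⁻¹).trace.re - Real.log (A⁻¹).det.re = d + Real.log A.det.re := by
  have hu : IsUnit A.det := (Matrix.isUnit_iff_isUnit_det A).1 hA.isUnit
  have him : A.det.im = 0 := ((Complex.lt_def.1 hA.det_pos).2).symm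
  have hre : A.det = (A.det.re : ℂ) := Complex.ext (by simp) (by simp [him])
  rw [Matrix.mul_nonsing_inv A hu, Matrix.det_nonsing_inv, Ring.inverse_eq_inv', hre,
    ← Complex.ofReal_inv, Complex.ofReal_re, Complex.ofReal_re, Real.log_inv]
  simp

/-! ### The shifted matrix and its trace equation -/

lemma shift_eq {d : ℕ} {M : Matrix (Fin d) (Fin d) ℂ} (hM : M.IsHermitian) (θ : ℝ) :
    M + θ • 1 = (hM.eigenvectorUnitary : Matrix (Fin d) (Fin d) ℂ) *
      diagonal (fun i => ((hM.eigenvalues i + θ : ℝ) : ℂ)) *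
      star (hM.eigenvectorUnitary : Matrix (Fin d) (Fin d) ℂ) := by
  have hD : diagonal (fun i => ((hM.eigenvalues i + θ : ℝ) : ℂ)) =
      diagonal (RCLike.ofReal ∘ hM.eigenvalues) + (θ • 1 : Matrix (Fin d) (Fin d) ℂ) := by
    ext i j
    by_cases hij : i = j
    · subst hij; simp
    · simp [hij]
  have hUU : (hM.eigenvectorUnitary : Matrix (Fin d) (Fin d) ℂ) *
      star (hM.eigenvectorUnitary : Matrix (Fin d) (Fin d) ℂ) = 1 := Unitary.coe_mul_star_self _
  rw [hD, Matrix.mul_add, Matrix.add_mul, Matrix.mul_smul, Matrix.smul_mul, Matrix.mul_one,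
    hUU]
  congr 1
  exact hM.spectral_theorem

lemma shift_posDef {d : ℕ} {M : Matrix (Fin d) (Fin d) ℂ} (hM : M.IsHermitian) {θ : ℝ}
    (h : ∀ i, 0 < hM.eigenvalues i + θ) : (M + θ • 1).PosDef := by
  rw [shift_eq hM, Unitary.isUnit_coe.posDef_star_right_conjugate_iff, Matrix.posDef_diagonal_iff]
  intro i
  exact_mod_cast h i

lemma shift_inv_trace {d : ℕ} {M : Matrix (Fin d) (Fin d) ℂ} (hM : M.IsHermitian) {θ : ℝ}
    (h : ∀ i, 0 < hM.eigenvalues i + θ) :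
    ((M + θ • 1)⁻¹).trace.re = ∑ i, (hM.eigenvalues i + θ)⁻¹ := by
  set U := (hM.eigenvectorUnitary : Matrix (Fin d) (Fin d) ℂ) with hU
  have hUU : star U * U = 1 := Unitary.coe_star_mul_self _
  have hUU' : U * star U = 1 := Unitary.coe_mul_star_self _
  have hinv : (M + θ • 1)⁻¹ =
      U * diagonal (fun i => (((hM.eigenvalues i + θ)⁻¹ : ℝ) : ℂ)) * star U := by
    apply Matrix.inv_eq_right_inv
    rw [shift_eq hM, ← hU]
    calc _ = U * (diagonal (fun i => ((hM.eigenvalues i + θ : ℝ) : ℂ)) * (star U * U) *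
          diagonal (fun i => (((hM.eigenvalues i + θ)⁻¹ : ℝ) : ℂ))) * star U := by
          simp only [Matrix.mul_assoc]
      _ = 1 := by
          rw [hUU, Matrix.mul_one, Matrix.diagonal_mul_diagonal]
          have : (fun i => ((hM.eigenvalues i + θ : ℝ) : ℂ) *
              (((hM.eigenvalues i + θ)⁻¹ : ℝ) : ℂ)) = fun _ => 1 := by
            funext i
            rw [← Complex.ofReal_mul, mul_inv_cancel₀ (h i).ne', Complex.ofReal_one]
          rw [this, Matrix.diagonal_one, Matrix.mul_one, hUU']
  rw [hinv, Matrix.trace_mul_cycle, hUU, Matrix.one_mul, Matrix.trace_diagonal,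
    ← Complex.ofReal_sum, Complex.ofReal_re]

lemma add_pos_of_neg_iInf_lt {d : ℕ} (l : Fin d → ℝ) {θ : ℝ} (h : -(⨅ i, l i) < θ) (i : Fin d) :
    0 < l i + θ := by
  have := ciInf_le (Set.finite_range l).bddBelow i
  linarith

lemma existsUnique_sum_inv {d : ℕ} (hd : 0 < d) (l : Fin d → ℝ) :
    ∃! θ : ℝ, -(⨅ i, l i) < θ ∧ ∑ i, (l i + θ)⁻¹ = 1 := by
  have : Nonempty (Fin d) := ⟨⟨0, hd⟩⟩
  set m := ⨅ i, l i with hm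
  have hd1 : (1 : ℝ) ≤ d := by exact_mod_cast hd
  have hmin : ∀ i, m ≤ l i := fun i => ciInf_le (Set.finite_range l).bddBelow i
  have hcont : ContinuousOn (fun θ : ℝ => ∑ i, (l i + θ)⁻¹) (Set.Icc (1 - m) (d - m)) := by
    refine continuousOn_finsetSum _ fun i _ => ContinuousOn.inv₀ (by fun_prop) ?_
    intro θ hθ
    have := hθ.1
    have := hmin i
    exact (by linarith : 0 < l i + θ).ne'
  have hlow : ∑ i, (l i + (d - m))⁻¹ ≤ 1 := by
    calc _ ≤ ∑ _i : Fin d, (d : ℝ)⁻¹ := by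
          refine Finset.sum_le_sum fun i _ => inv_anti₀ (by linarith) ?_
          linarith [hmin i]
      _ = 1 := by
          have : (d : ℝ) ≠ 0 := by linarith
          simp [this]
  have hhigh : 1 ≤ ∑ i, (l i + (1 - m))⁻¹ := by
    obtain ⟨k, hk⟩ := exists_eq_ciInf_of_finite (f := l)
    -- the summand of a minimal eigenvalue is already `1`
    calc (1 : ℝ) = (l k + (1 - m))⁻¹ := by rw [hk, ← hm]; norm_num
      _ ≤ _ := Finset.single_le_sum (f := fun i => (l i + (1 - m))⁻¹)
          (fun i _ => inv_nonneg.2 (by linarith [hmin i])) (Finset.mem_univ k)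
  obtain ⟨θ, hθ, hsum⟩ := intermediate_value_Icc' (by linarith) hcont ⟨hlow, hhigh⟩
  have hlt : ∀ a b : ℝ, -m < a → a < b → ∑ i, (l i + b)⁻¹ < ∑ i, (l i + a)⁻¹ := by
    intro a b ha hab
    refine Finset.sum_lt_sum_of_nonempty Finset.univ_nonempty fun i _ => ?_
    exact inv_strictAnti₀ (by linarith [hmin i]) (by linarith)
  refine ⟨θ, ⟨by linarith [hθ.1], hsum⟩, ?_⟩
  rintro t ⟨ht, hts⟩
  have hsum' : ∑ i, (l i + θ)⁻¹ = 1 := hsum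
  rcases lt_trichotomy t θ with h | h | h
  · linarith [hlt t θ ht h]
  · exact h
  · linarith [hlt θ t (by linarith [hθ.1]) h]

/-! ### The objective on density matrices -/

/-- On trace-one matrices, replacing `M` by `M + θI` only shifts the linear term by `θ`. -/
lemma burgLinObj_of_posDef {d : ℕ} {M ρ : Matrix (Fin d) (Fin d) ℂ} (θ : ℝ) (hρ : ρ.PosDef)
    (htr : ρ.trace = 1) : burgLinObj d M ρ =
      ((((M + θ • 1) * ρ).trace.re - Real.log ρ.det.re - θ : ℝ) : EReal) := by
  rw [burgLinObj, if_neg hρ.det_pos.ne', Matrix.add_mul, Matrix.trace_add, Matrix.smul_mul,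
    Matrix.one_mul, Matrix.trace_smul, htr]
  congr 1
  simp
  ring

/-- `G(ρ) = tr(Mρ) - log det ρ` attains its minimum over the set
of density matrices at the unique point `ρ* = (M + θI)⁻¹`, where `θ` is the
unique real with `θ > -λ_min(M)` and `tr((M + θI)⁻¹) = 1`. -/
theorem burgLinObj_minimizer (d : ℕ) (hd : 0 < d)
    (M : Matrix (Fin d) (Fin d) ℂ) (hM : M.IsHermitian) :
    (∃! θ : ℝ, -(⨅ i, hM.eigenvalues i) < θ ∧ (((M + θ • 1)⁻¹).trace).re = 1) ∧
    ∀ θ : ℝ, -(⨅ i, hM.eigenvalues i) < θ → (((M + θ • 1)⁻¹).trace).re = 1 →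
      (M + θ • 1)⁻¹ ∈ densityMatrices d ∧
      (∀ ρ ∈ densityMatrices d, burgLinObj d M (M + θ • 1)⁻¹ ≤ burgLinObj d M ρ) ∧
      (∀ σ ∈ densityMatrices d,
        (∀ ρ ∈ densityMatrices d, burgLinObj d M σ ≤ burgLinObj d M ρ) →
        σ = (M + θ • 1)⁻¹) := by
  have hpos := fun (θ : ℝ) (h : -(⨅ i, hM.eigenvalues i) < θ) =>
    add_pos_of_neg_iInf_lt hM.eigenvalues h
  constructor
  · obtain ⟨θ, ⟨h1, h2⟩, huniq⟩ := existsUnique_sum_inv hd hM.eigenvalues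
    refine ⟨θ, ⟨h1, (shift_inv_trace hM (hpos θ h1)).trans h2⟩, ?_⟩
    rintro t ⟨ht1, ht2⟩
    exact huniq t ⟨ht1, (shift_inv_trace hM (hpos t ht1)).symm.trans ht2⟩
  · intro θ hθ htr
    have hA : (M + θ • 1).PosDef := shift_posDef hM (hpos θ hθ)
    set A := M + θ • 1 with hAdef
    have htr1 : (A⁻¹).trace = 1 := by
      have him : (A⁻¹).trace.im = 0 :=
        ((Complex.le_def.1 hA.inv.posSemidef.trace_nonneg).2).symm
      exact Complex.ext (by simpa using htr) (by simpa using him)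
    have hmem : A⁻¹ ∈ densityMatrices d := ⟨hA.inv.posSemidef, htr1⟩
    have hval := burgLinObj_of_posDef (M := M) θ hA.inv htr1
    rw [← hAdef, burg_at_inv hA] at hval
    refine ⟨hmem, ?_, ?_⟩
    · rintro ρ ⟨hρ, hρ1⟩
      by_cases hdet : ρ.det = 0
      · rw [burgLinObj, burgLinObj, if_pos hdet]
        exact le_top
      · have hρd : ρ.PosDef := hρ.posDef_iff_det_ne_zero.2 hdet
        rw [hval, burgLinObj_of_posDef θ hρd hρ1, EReal.coe_le_coe_iff]
        linarith [burg_lower_bound hA hρd]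
    · rintro σ ⟨hσ, hσ1⟩ hmin
      have h := hmin _ hmem
      rw [hval] at h
      by_cases hdet : σ.det = 0
      · rw [burgLinObj, if_pos hdet, top_le_iff] at h
        exact absurd h (EReal.coe_ne_top _)
      · have hσd : σ.PosDef := hσ.posDef_iff_det_ne_zero.2 hdet
        rw [burgLinObj_of_posDef θ hσd hσ1, EReal.coe_le_coe_iff] at h
        exact burg_lower_bound_eq hA hσd (by linarith)
end

section
/- Let M be a d×d Hermitian complex matrix with spectral decomposition M = U diag(λ_1, ..., λ_d) U* for a unitary U. Then the minimum over the set 𝒟 of d×d density matrices of the extended-real-valued function ρ ↦ tr(Mρ) − log det ρ (equal to +∞ at singular ρ) equals the minimum over the probability simplex Δ = {x ∈ ℝ^d : x_i ≥ 0, ∑_i x_i = 1} of x ↦ ∑_{i=1}^d λ_i x_i − ∑_{i=1}^d log x_i (equal to +∞ when some x_i = 0); moreover, if x* minimizes the latter, then U diag(x*_1, ..., x*_d) U* minimizes the former. -/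
/-!
The map `x ↦ U diag(x) U*` sends the simplex into the density matrices and carries the simplex
objective to the matrix objective (`conj_diagonal_mem_and_burgLinObj_eq`). Conversely, replacing a
density matrix `ρ` by the diagonal of `U* ρ U` preserves `tr(Mρ)` and the unit trace, and does not
decrease the log-determinant, by Hadamard's inequality (`log_det_le_sum_log_diag`); so every value
of the matrix objective dominates a value of the simplex objective (`exists_logBarrierObj_le`). Both
claims follow by comparing values.
-/

open Matrix
open scoped ComplexOrder

/-- Logarithmic form of Hadamard's determinant inequality `det A ≤ ∏ A i i`. With eigenvalues `μ j`
and a unitary matrix `V` of eigenvectors, `A i i = ∑ j, |V i j|² μ j`; Jensen's inequality for `log`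
applies because the rows of `|V i j|²` sum to one, and summing over `i` uses its columns. -/
lemma log_det_le_sum_log_diag {d : ℕ} {A : Matrix (Fin d) (Fin d) ℂ} (hA : A.PosDef) :
    Real.log A.det.re ≤ ∑ i, Real.log (A i i).re := by
  set μ := hA.isHermitian.eigenvalues with hμ
  have hpos : ∀ j, 0 < μ j := hA.eigenvalues_pos
  set V : Matrix (Fin d) (Fin d) ℂ := (hA.isHermitian.eigenvectorUnitary : Matrix (Fin d) (Fin d) ℂ) with hV
  have hV1 : V * star V = 1 := Unitary.coe_mul_star_self _
  have hV2 : star V * V = 1 := Unitary.coe_star_mul_self _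
  have hrow : ∀ i, ∑ j, Complex.normSq (V i j) = 1 := by
    intro i
    have h := congrArg Complex.re (congrFun (congrFun hV1 i) i)
    simpa [Matrix.mul_apply, Matrix.star_apply, Complex.mul_conj, -Complex.mul_re] using h
  have hcol : ∀ j, ∑ i, Complex.normSq (V i j) = 1 := by
    intro j
    have h := congrArg Complex.re (congrFun (congrFun hV2 j) j)
    simpa [Matrix.mul_apply, Matrix.star_apply, ← Complex.normSq_eq_conj_mul_self,
      -Complex.mul_re] using h
  have hdiag : ∀ i, (A i i).re = ∑ j, Complex.normSq (V i j) * μ j := by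
    intro i
    have h : A = V * diagonal (fun j => (μ j : ℂ)) * star V :=
      hA.isHermitian.spectral_theorem
    rw [h, Matrix.mul_apply, Complex.re_sum]
    refine Finset.sum_congr rfl fun j _ => ?_
    rw [Matrix.mul_diagonal, Matrix.star_apply, mul_right_comm]
    have : V i j * star (V i j) = (Complex.normSq (V i j) : ℂ) := Complex.mul_conj _
    rw [this, ← Complex.ofReal_mul, Complex.ofReal_re]
  have hdet : A.det.re = ∏ j, μ j := by
    have h : A.det = ((∏ j, μ j : ℝ) : ℂ) := by
      rw [hA.isHermitian.det_eq_prod_eigenvalues, Complex.ofReal_prod]; rfl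
    rw [h, Complex.ofReal_re]
  rw [hdet, Real.log_prod fun j _ => (hpos j).ne']
  calc ∑ j, Real.log (μ j) = ∑ j, ∑ i, Complex.normSq (V i j) * Real.log (μ j) := by
        simp_rw [← Finset.sum_mul, hcol, one_mul]
    _ = ∑ i, ∑ j, Complex.normSq (V i j) * Real.log (μ j) := Finset.sum_comm
    _ ≤ ∑ i, Real.log (A i i).re := Finset.sum_le_sum fun i _ => by
        rw [hdiag i]
        exact strictConcaveOn_log_Ioi.concaveOn.le_map_sum
          (fun j _ => Complex.normSq_nonneg _) (hrow i) (fun j _ => hpos j)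

/-- Conjugation by `U` turns `tr (U diag(λ) U* ρ)` into a weighted sum of the diagonal entries of
`U* ρ U`. -/
lemma re_trace_conj_diagonal_mul {d : ℕ} (U ρ : Matrix (Fin d) (Fin d) ℂ) (lam : Fin d → ℝ) :
    (U * diagonal (fun i => (lam i : ℂ)) * star U * ρ).trace.re
      = ∑ i, lam i * ((star U * ρ * U) i i).re := by
  rw [Matrix.mul_assoc, Matrix.mul_assoc, Matrix.trace_mul_comm, Matrix.mul_assoc, Matrix.trace,
    Complex.re_sum]
  refine Finset.sum_congr rfl fun i _ => ?_
  rw [Matrix.diag_apply, Matrix.diagonal_mul, Complex.re_ofReal_mul]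

/-- On matrices diagonal in the basis `U`, the matrix objective is the simplex objective. -/
lemma conj_diagonal_mem_and_burgLinObj_eq {d : ℕ} {U : Matrix (Fin d) (Fin d) ℂ}
    (hU : U ∈ Matrix.unitaryGroup (Fin d) ℂ) (lam : Fin d → ℝ) {x : Fin d → ℝ}
    (hx : x ∈ stdSimplex ℝ (Fin d)) :
    U * diagonal (fun i => (x i : ℂ)) * star U ∈ densityMatrices d ∧
      burgLinObj d (U * diagonal (fun i => (lam i : ℂ)) * star U)
        (U * diagonal (fun i => (x i : ℂ)) * star U) = logBarrierObj d lam x := by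
  have hU2 : star U * U = 1 := (Matrix.mem_unitaryGroup_iff').1 hU
  have hdet : (U * diagonal (fun i => (x i : ℂ)) * star U).det = ((∏ i, x i : ℝ) : ℂ) := by
    rw [Matrix.det_mul, mul_comm, ← Matrix.det_mul, ← Matrix.mul_assoc, hU2, Matrix.one_mul,
      Matrix.det_diagonal, Complex.ofReal_prod]
  have hconj : star U * (U * diagonal (fun i => (x i : ℂ)) * star U) * U
      = diagonal (fun i => (x i : ℂ)) := by
    rw [← Matrix.mul_assoc, ← Matrix.mul_assoc, hU2, Matrix.one_mul, Matrix.mul_assoc, hU2,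
      Matrix.mul_one]
  refine ⟨⟨?_, ?_⟩, ?_⟩
  · refine PosSemidef.mul_mul_conjTranspose_same ?_ U
    exact posSemidef_diagonal_iff.2 fun i => Complex.zero_le_real.2 (hx.1 i)
  · rw [Matrix.trace_mul_comm, ← Matrix.mul_assoc, hU2, Matrix.one_mul, Matrix.trace_diagonal,
      ← Complex.ofReal_sum, hx.2, Complex.ofReal_one]
  · unfold burgLinObj logBarrierObj
    rw [re_trace_conj_diagonal_mul, hconj, hdet]
    by_cases h : ∀ i, 0 < x i
    · have hne : ((∏ i, x i : ℝ) : ℂ) ≠ 0 :=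
        Complex.ofReal_ne_zero.2 (Finset.prod_pos fun i _ => h i).ne'
      rw [if_neg hne, if_pos h, Complex.ofReal_re, Real.log_prod fun i _ => (h i).ne']
      simp
    · have hz : ((∏ i, x i : ℝ) : ℂ) = 0 := by
        push Not at h
        obtain ⟨i, hi⟩ := h
        rw [Complex.ofReal_eq_zero]
        exact Finset.prod_eq_zero (Finset.mem_univ i) (le_antisymm hi (hx.1 i))
      rw [if_pos hz, if_neg h]

/-- Pinching: the diagonal of `ρ` in the basis `U` is a point of the simplex whose objective value
is at most that of `ρ`. -/
lemma exists_logBarrierObj_le {d : ℕ} {U : Matrix (Fin d) (Fin d) ℂ}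
    (hU : U ∈ Matrix.unitaryGroup (Fin d) ℂ) (lam : Fin d → ℝ) {ρ : Matrix (Fin d) (Fin d) ℂ}
    (hρ : ρ ∈ densityMatrices d) :
    ∃ y ∈ stdSimplex ℝ (Fin d), logBarrierObj d lam y
      ≤ burgLinObj d (U * diagonal (fun i => (lam i : ℂ)) * star U) ρ := by
  have hU1 : U * star U = 1 := (Matrix.mem_unitaryGroup_iff).1 hU
  have hB : (star U * ρ * U).PosSemidef := hρ.1.conjTranspose_mul_mul_same U
  have hdet : (star U * ρ * U).det = ρ.det := by
    rw [Matrix.det_mul, mul_comm, ← Matrix.det_mul, ← Matrix.mul_assoc, hU1, Matrix.one_mul]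
  have htr : (star U * ρ * U).trace = 1 := by
    rw [Matrix.trace_mul_comm, ← Matrix.mul_assoc, hU1, Matrix.one_mul, hρ.2]
  refine ⟨fun i => ((star U * ρ * U) i i).re, ⟨fun i => ?_, ?_⟩, ?_⟩
  · exact (Complex.le_def.1 (hB.diag_nonneg (i := i))).1
  · have h := congrArg Complex.re htr
    rwa [Matrix.trace, Complex.re_sum] at h
  · unfold burgLinObj logBarrierObj
    by_cases h0 : ρ.det = 0
    · rw [if_pos h0]; exact le_top
    · have hBd : (star U * ρ * U).PosDef := by
        rw [hB.posDef_iff_isUnit, Matrix.isUnit_iff_isUnit_det, hdet]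
        exact isUnit_iff_ne_zero.2 h0
      have hpos : ∀ i, 0 < ((star U * ρ * U) i i).re := fun i =>
        (Complex.lt_def.1 (hBd.diag_pos (i := i))).1
      rw [if_neg h0, if_pos hpos, re_trace_conj_diagonal_mul,
        EReal.coe_le_coe_iff, ← hdet]
      exact sub_le_sub_left (log_det_le_sum_log_diag hBd) _

/-- for `M = U diag(λ) U*` with `U` unitary, the minimum of
`ρ ↦ tr(Mρ) - log det ρ` over density matrices equals the minimum of
`x ↦ ∑ i, λ_i x_i - ∑ i, log x_i` over the probability simplex; moreover any
minimizer `x*` of the latter yields the minimizer `U diag(x*) U*` of the former. -/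
theorem burgLinObj_reduction_to_simplex (d : ℕ)
    (M U : Matrix (Fin d) (Fin d) ℂ) (hU : U ∈ Matrix.unitaryGroup (Fin d) ℂ)
    (lam : Fin d → ℝ)
    (hM : M = U * Matrix.diagonal (fun i => (lam i : ℂ)) * star U) :
    sInf (burgLinObj d M '' densityMatrices d)
      = sInf (logBarrierObj d lam '' stdSimplex ℝ (Fin d)) ∧
    ∀ x ∈ stdSimplex ℝ (Fin d),
      (∀ y ∈ stdSimplex ℝ (Fin d), logBarrierObj d lam x ≤ logBarrierObj d lam y) →
      (U * Matrix.diagonal (fun i => (x i : ℂ)) * star U ∈ densityMatrices d ∧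
       ∀ ρ ∈ densityMatrices d,
         burgLinObj d M (U * Matrix.diagonal (fun i => (x i : ℂ)) * star U)
           ≤ burgLinObj d M ρ) := by
  subst hM
  refine ⟨le_antisymm ?_ ?_, fun x hx hmin => ?_⟩
  · refine le_sInf ?_
    rintro _ ⟨x, hx, rfl⟩
    obtain ⟨hmem, heq⟩ := conj_diagonal_mem_and_burgLinObj_eq hU lam hx
    exact sInf_le ⟨_, hmem, heq⟩
  · refine le_sInf ?_
    rintro _ ⟨ρ, hρ, rfl⟩
    obtain ⟨y, hy, hle⟩ := exists_logBarrierObj_le hU lam hρ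
    exact (sInf_le (Set.mem_image_of_mem _ hy)).trans hle
  · obtain ⟨hmem, heq⟩ := conj_diagonal_mem_and_burgLinObj_eq hU lam hx
    refine ⟨hmem, fun ρ hρ => ?_⟩
    obtain ⟨y, hy, hle⟩ := exists_logBarrierObj_le hU lam hρ
    exact heq.le.trans ((hmin y hy).trans hle)
end

section
/- Let ρ_t be a d×d Hermitian positive definite density matrix, G a d×d Hermitian complex matrix, and η > 0. Then the mirror descent update ρ_{t+1}, defined as the unique minimizer over the set 𝒟 of d×d density matrices of ρ ↦ η tr(G(ρ − ρ_t)) + D_h(ρ, ρ_t) (with value +∞ at singular ρ), is Hermitian positive definite; in particular, tr(A ρ_{t+1}) > 0 for every nonzero Hermitian positive semi-definite matrix A. -/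
/-!
Write `ℓ` for the part of the objective that is affine in `ρ`. Where `ρ` is nonsingular the
objective is a constant minus the logarithm of `det ρ * exp (-ℓ ρ)`, and the latter function is
continuous and, on density matrices, vanishes exactly at singular `ρ`. They are the image
of the compact set of `S` with `tr (Sᴴ S) = 1` under `S ↦ Sᴴ S`, so this function attains a maximum
over them; the maximum is positive since the value at `ρt` is, and a maximizer minimizes the
objective (`exists_minimizer`). Any minimizer has a finite value, hence is nonsingular, hence
positive definite (`posDef_of_minimizer`). Uniqueness is the strict midpoint log-concavity of the
determinant (`det_mul_det_lt`), obtained by diagonalizing two positive definite matrices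
simultaneously by a congruence. Finally, `tr (A σ) = tr (S A Sᴴ)` for `σ = Sᴴ S` with `S`
invertible, and a nonzero positive semi-definite matrix has positive trace.
-/

open Matrix
open scoped ComplexOrder

open Classical in
/-- The extended-real-valued mirror descent objective
`ρ ↦ η tr(G(ρ - ρt)) + D_h(ρ, ρt)` with the Burg-entropy Bregman divergence
`D_h(ρ, σ) = log det σ - log det ρ + tr(σ⁻¹ρ) - d`, equal to `+∞` at
singular `ρ`. -/
noncomputable def mirrorObj (d : ℕ) (η : ℝ) (G ρt ρ : Matrix (Fin d) (Fin d) ℂ) : EReal :=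
  if ρ.det = 0 then ⊤
  else ((η * ((G * (ρ - ρt)).trace).re +
    (Real.log ((ρt.det).re) - Real.log ((ρ.det).re) + ((ρt⁻¹ * ρ).trace).re - d) : ℝ) : EReal)

open scoped MatrixOrder in
lemma exists_eq_conjTranspose_mul_self {d : ℕ} {A : Matrix (Fin d) (Fin d) ℂ}
    (hA : A.PosSemidef) : ∃ S : Matrix (Fin d) (Fin d) ℂ, A = Sᴴ * S :=
  CStarAlgebra.nonneg_iff_eq_star_mul_self.mp hA.nonneg

lemma exists_isUnit_eq_conjTranspose_mul_self {d : ℕ} {A : Matrix (Fin d) (Fin d) ℂ}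
    (hA : A.PosDef) : ∃ S : Matrix (Fin d) (Fin d) ℂ, IsUnit S ∧ A = Sᴴ * S := by
  obtain ⟨S, hS⟩ := exists_eq_conjTranspose_mul_self hA.posSemidef
  refine ⟨S, ?_, hS⟩
  have h := hA.isUnit
  rw [hS, isUnit_iff_isUnit_det, det_mul] at h
  rw [isUnit_iff_isUnit_det]
  exact isUnit_of_mul_isUnit_right h

/-- Simultaneous diagonalization of two positive definite matrices by a congruence. -/
lemma exists_simultaneous_diag {d : ℕ} {A B : Matrix (Fin d) (Fin d) ℂ}
    (hA : A.PosDef) (hB : B.PosDef) :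
    ∃ (T : Matrix (Fin d) (Fin d) ℂ) (l : Fin d → ℝ), IsUnit T ∧ (∀ i, 0 < l i) ∧
      A = Tᴴ * T ∧ B = Tᴴ * diagonal (fun i => (l i : ℂ)) * T := by
  obtain ⟨S, hS, rfl⟩ := exists_isUnit_eq_conjTranspose_mul_self hA
  obtain ⟨u, rfl⟩ := hS
  set V : Matrix (Fin d) (Fin d) ℂ := ↑u⁻¹
  have hVS : V * (u : Matrix (Fin d) (Fin d) ℂ) = 1 := u.inv_mul
  have hSV : (u : Matrix (Fin d) (Fin d) ℂ)ᴴ * Vᴴ = 1 := by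
    rw [← conjTranspose_mul, hVS, conjTranspose_one]
  have hC : (Vᴴ * B * V).PosDef :=
    (Matrix.IsUnit.posDef_star_left_conjugate_iff (u⁻¹).isUnit).2 hB
  set C := Vᴴ * B * V with hCdef
  have hBC : B = (u : Matrix (Fin d) (Fin d) ℂ)ᴴ * C * u := by
    calc B = ((u : Matrix (Fin d) (Fin d) ℂ)ᴴ * Vᴴ) * B * (V * u) := by rw [hSV, hVS]; simp
      _ = _ := by rw [hCdef]; simp only [Matrix.mul_assoc]
  let U : Matrix (Fin d) (Fin d) ℂ := hC.1.eigenvectorUnitary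
  have hUU : U * Uᴴ = 1 := (Matrix.mem_unitaryGroup_iff).1 hC.1.eigenvectorUnitary.2
  have hspec : C = U * diagonal (fun i => (hC.1.eigenvalues i : ℂ)) * Uᴴ := by
    have := hC.1.spectral_theorem
    rw [Unitary.conjStarAlgAut_apply] at this
    exact this
  refine ⟨Uᴴ * u, hC.1.eigenvalues, ?_, hC.eigenvalues_pos, ?_, ?_⟩
  · refine IsUnit.mul ?_ u.isUnit
    exact IsUnit.of_mul_eq_one_right _ hUU
  · rw [conjTranspose_mul, conjTranspose_conjTranspose, Matrix.mul_assoc, ← Matrix.mul_assoc U,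
      hUU, Matrix.one_mul]
  · rw [conjTranspose_mul, conjTranspose_conjTranspose]
    conv_lhs => rw [hBC, hspec]
    simp only [Matrix.mul_assoc]

/-- Strict midpoint log-concavity of the determinant on positive definite matrices. -/
lemma det_mul_det_lt {d : ℕ} {A B : Matrix (Fin d) (Fin d) ℂ}
    (hA : A.PosDef) (hB : B.PosDef) (hAB : A ≠ B) :
    A.det.re * B.det.re < (((1 / 2 : ℂ) • (A + B)).det.re) ^ 2 := by
  obtain ⟨T, l, hT, hl, rfl, rfl⟩ := exists_simultaneous_diag hA hB
  have hmid : (1 / 2 : ℂ) • (Tᴴ * T + Tᴴ * diagonal (fun i => (l i : ℂ)) * T)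
      = Tᴴ * diagonal (fun i => (((1 + l i) / 2 : ℝ) : ℂ)) * T := by
    have : diagonal (fun i => (((1 + l i) / 2 : ℝ) : ℂ))
        = (1 / 2 : ℂ) • (1 + diagonal (fun i => (l i : ℂ))) := by
      ext i j
      by_cases h : i = j
      · subst h; simp; ring
      · simp [h]
    rw [this]
    simp [Matrix.mul_add, Matrix.add_mul]
  have hdet : ∀ m : Fin d → ℝ, (Tᴴ * diagonal (fun i => (m i : ℂ)) * T).det.re
      = Complex.normSq T.det * ∏ i, m i := by
    intro m
    have : (Tᴴ * diagonal (fun i => (m i : ℂ)) * T).det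
        = ((Complex.normSq T.det * ∏ i, m i : ℝ) : ℂ) := by
      rw [det_mul, det_mul, det_diagonal, det_conjTranspose, Complex.ofReal_mul,
        Complex.normSq_eq_conj_mul_self]
      push_cast
      simp only [starRingEnd_apply]
      ring
    rw [this, Complex.ofReal_re]
  have hdet1 : (Tᴴ * T).det.re = Complex.normSq T.det := by
    have := hdet (fun _ => 1)
    simpa using this
  have hpos : 0 < Complex.normSq T.det :=
    Complex.normSq_pos.2 ((isUnit_iff_isUnit_det _).1 hT).ne_zero
  have hne : ∃ i, l i ≠ 1 := by
    by_contra! h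
    apply hAB
    simp [h]
  have hprod : ∏ i, l i < (∏ i, (1 + l i) / 2) ^ 2 := by
    rw [← Finset.prod_pow]
    obtain ⟨i, hi⟩ := hne
    refine Finset.prod_lt_prod (fun i _ => hl i) (fun i _ => ?_) ⟨i, Finset.mem_univ _, ?_⟩
    · nlinarith [sq_nonneg (l i - 1)]
    · have : 0 < (l i - 1) ^ 2 := by
        have := sub_ne_zero.2 hi
        positivity
      nlinarith
  rw [hmid, hdet, hdet, hdet1]
  calc _ = Complex.normSq T.det ^ 2 * ∏ i, l i := by ring
    _ < Complex.normSq T.det ^ 2 * (∏ i, (1 + l i) / 2) ^ 2 := by gcongr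
    _ = _ := by ring

lemma isCompact_densityMatrices (d : ℕ) : IsCompact (densityMatrices d) := by
  have himg : densityMatrices d = (fun S : Matrix (Fin d) (Fin d) ℂ => Sᴴ * S) ''
      {S | (Sᴴ * S).trace = 1} := by
    ext ρ
    constructor
    · rintro ⟨h1, h2⟩
      obtain ⟨S, rfl⟩ := exists_eq_conjTranspose_mul_self h1
      exact ⟨S, h2, rfl⟩
    · rintro ⟨S, hS, rfl⟩
      exact ⟨posSemidef_conjTranspose_mul_self S, hS⟩
  rw [himg]
  refine IsCompact.image ?_ (by fun_prop)
  have hball : IsCompact (Set.univ.pi fun _ : Fin d => Set.univ.pi fun _ : Fin d =>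
      Metric.closedBall (0 : ℂ) 1) :=
    isCompact_univ_pi fun _ => isCompact_univ_pi fun _ => isCompact_closedBall _ _
  refine IsCompact.of_isClosed_subset hball ?_ ?_
  · exact isClosed_eq (by fun_prop) continuous_const
  · intro S hS i _ j _
    have hsum : ∑ b, ∑ a, Complex.normSq (S a b) = 1 := by
      have h : (Sᴴ * S).trace = 1 := hS
      have h2 : (Sᴴ * S).trace = ((∑ b, ∑ a, Complex.normSq (S a b) : ℝ) : ℂ) := by
        simp only [trace, diag_apply, mul_apply, conjTranspose_apply]
        push_cast
        refine Finset.sum_congr rfl fun b _ => Finset.sum_congr rfl fun a _ => ?_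
        rw [Complex.normSq_eq_conj_mul_self, starRingEnd_apply]
      rw [h2] at h
      exact_mod_cast h
    have hle : Complex.normSq (S i j) ≤ 1 := by
      rw [← hsum]
      calc Complex.normSq (S i j) ≤ ∑ a, Complex.normSq (S a j) :=
            Finset.single_le_sum (f := fun a => Complex.normSq (S a j))
              (fun a _ => Complex.normSq_nonneg _) (Finset.mem_univ i)
        _ ≤ _ := Finset.single_le_sum (f := fun b => ∑ a, Complex.normSq (S a b))
              (fun b _ => Finset.sum_nonneg fun a _ => Complex.normSq_nonneg _)
              (Finset.mem_univ j)
    rw [Complex.normSq_eq_norm_sq] at hle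
    rw [mem_closedBall_zero_iff]
    nlinarith [norm_nonneg (S i j)]

lemma det_re_pos {d : ℕ} {A : Matrix (Fin d) (Fin d) ℂ} (hA : A.PosDef) : 0 < A.det.re :=
  (Complex.pos_iff.1 hA.det_pos).1

/-- A maximizer of `det ρ * exp (-ℓ ρ)`, with `ℓ` the affine part of the objective, minimizes the
objective. -/
lemma exists_minimizer {d : ℕ} {ρt : Matrix (Fin d) (Fin d) ℂ} (G : Matrix (Fin d) (Fin d) ℂ)
    (hρt : ρt.PosDef) (hρt1 : ρt.trace = 1) (η : ℝ) :
    ∃ σ ∈ densityMatrices d,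
      ∀ ρ ∈ densityMatrices d, mirrorObj d η G ρt σ ≤ mirrorObj d η G ρt ρ := by
  have hmem : ρt ∈ densityMatrices d := ⟨hρt.posSemidef, hρt1⟩
  obtain ⟨σ, hσ, hmax⟩ := (isCompact_densityMatrices d).exists_isMaxOn ⟨ρt, hmem⟩
    (f := fun ρ => ρ.det.re *
      Real.exp (-(η * ((G * (ρ - ρt)).trace).re + ((ρt⁻¹ * ρ).trace).re)))
    (by
      apply Continuous.continuousOn
      fun_prop)
  refine ⟨σ, hσ, fun ρ hρ => ?_⟩
  have hσpos : 0 < σ.det.re :=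
    pos_of_mul_pos_left ((mul_pos (det_re_pos hρt) (Real.exp_pos _)).trans_le (hmax hmem))
      (Real.exp_pos _).le
  have hσ0 : σ.det ≠ 0 := by
    intro h
    simp [h] at hσpos
  unfold mirrorObj
  rw [if_neg hσ0]
  split_ifs with h
  · exact le_top
  · have hρpos := det_re_pos (hρ.1.posDef_iff_det_ne_zero.2 h)
    have hle := Real.log_le_log (mul_pos hρpos (Real.exp_pos _)) (hmax hρ)
    rw [Real.log_mul hρpos.ne' (Real.exp_pos _).ne', Real.log_mul hσpos.ne' (Real.exp_pos _).ne',
      Real.log_exp, Real.log_exp] at hle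
    rw [EReal.coe_le_coe_iff]
    linarith

lemma posDef_of_minimizer {d : ℕ} {ρt G σ : Matrix (Fin d) (Fin d) ℂ}
    (hρt : ρt.PosDef) (hρt1 : ρt.trace = 1) {η : ℝ} (hσ : σ ∈ densityMatrices d)
    (hmin : ∀ ρ ∈ densityMatrices d, mirrorObj d η G ρt σ ≤ mirrorObj d η G ρt ρ) :
    σ.PosDef := by
  rw [hσ.1.posDef_iff_det_ne_zero]
  intro h
  have := hmin ρt ⟨hρt.posSemidef, hρt1⟩
  unfold mirrorObj at this
  rw [if_pos h, if_neg hρt.det_pos.ne', top_le_iff] at this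
  exact EReal.coe_ne_top _ this

lemma minimizer_unique {d : ℕ} {ρt G σ τ : Matrix (Fin d) (Fin d) ℂ}
    (hρt : ρt.PosDef) (hρt1 : ρt.trace = 1) {η : ℝ}
    (hσ : σ ∈ densityMatrices d) (hτ : τ ∈ densityMatrices d)
    (hσmin : ∀ ρ ∈ densityMatrices d, mirrorObj d η G ρt σ ≤ mirrorObj d η G ρt ρ)
    (hτmin : ∀ ρ ∈ densityMatrices d, mirrorObj d η G ρt τ ≤ mirrorObj d η G ρt ρ) :
    σ = τ := by
  by_contra hne
  have hσp := posDef_of_minimizer hρt hρt1 hσ hσmin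
  have hτp := posDef_of_minimizer hρt hρt1 hτ hτmin
  have hdet := det_mul_det_lt hσp hτp hne
  set M := (1 / 2 : ℂ) • (σ + τ) with hM
  have hMp : M.PosDef := (hσp.add hτp).smul (by norm_num [Complex.pos_iff])
  have hMmem : M ∈ densityMatrices d := by
    refine ⟨hMp.posSemidef, ?_⟩
    rw [hM, trace_smul, trace_add, hσ.2, hτ.2]
    norm_num
  have h1 := hσmin M hMmem
  have h2 := hτmin M hMmem
  unfold mirrorObj at h1 h2
  rw [if_neg hMp.det_pos.ne', if_neg hσp.det_pos.ne', EReal.coe_le_coe_iff] at h1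
  rw [if_neg hMp.det_pos.ne', if_neg hτp.det_pos.ne', EReal.coe_le_coe_iff] at h2
  have hlog := Real.log_lt_log (mul_pos (det_re_pos hσp) (det_re_pos hτp)) hdet
  rw [Real.log_mul (det_re_pos hσp).ne' (det_re_pos hτp).ne', Real.log_pow] at hlog
  have half_re : ∀ z : ℂ, ((1 / 2 : ℂ) * z).re = z.re / 2 := by
    intro z
    simp
    ring
  have e1 : ((G * (M - ρt)).trace).re
      = (((G * (σ - ρt)).trace).re + ((G * (τ - ρt)).trace).re) / 2 := by
    simp only [hM, Matrix.mul_sub, Matrix.mul_smul, Matrix.mul_add, trace_sub, trace_smul,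
      trace_add, smul_eq_mul, Complex.sub_re, half_re, Complex.add_re]
    ring
  have e2 : ((ρt⁻¹ * M).trace).re
      = (((ρt⁻¹ * σ).trace).re + ((ρt⁻¹ * τ).trace).re) / 2 := by
    simp only [hM, Matrix.mul_smul, Matrix.mul_add, trace_smul,
      trace_add, smul_eq_mul, half_re, Complex.add_re]
  rw [e1, e2] at h1 h2
  push_cast at hlog
  linarith

lemma trace_mul_re_pos {d : ℕ} {A σ : Matrix (Fin d) (Fin d) ℂ} (hA : A.PosSemidef)
    (hA0 : A ≠ 0) (hσ : σ.PosDef) : 0 < ((A * σ).trace).re := by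
  obtain ⟨S, hS, rfl⟩ := exists_isUnit_eq_conjTranspose_mul_self hσ
  have hpsd : (S * A * Sᴴ).PosSemidef := hA.mul_mul_conjTranspose_same S
  have htr : (A * (Sᴴ * S)).trace = (S * A * Sᴴ).trace := by
    rw [← Matrix.mul_assoc, trace_mul_comm, ← Matrix.mul_assoc]
  have hne : (S * A * Sᴴ).trace ≠ 0 := by
    rw [Ne, hpsd.trace_eq_zero_iff]
    intro h
    have hSs : IsUnit Sᴴ := hS.star
    rw [hSs.mul_left_eq_zero, hS.mul_right_eq_zero] at h
    exact hA0 h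
  rw [htr]
  exact (Complex.pos_iff.1 (lt_of_le_of_ne hpsd.trace_nonneg hne.symm)).1

/-- the mirror descent update, i.e. the unique minimizer over the
density matrices of `ρ ↦ η tr(G(ρ - ρt)) + D_h(ρ, ρt)`, exists and is Hermitian
positive definite; in particular `tr(A ρ_{t+1}) > 0` for every nonzero Hermitian
positive semi-definite `A`. -/
theorem mirror_descent_update_posDef (d : ℕ) (hd : 0 < d)
    (ρt G : Matrix (Fin d) (Fin d) ℂ)
    (hρt : ρt.PosDef) (hρt1 : ρt.trace = 1) (hG : G.IsHermitian)
    (η : ℝ) (hη : 0 < η) :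
    (∃! σ : Matrix (Fin d) (Fin d) ℂ, σ ∈ densityMatrices d ∧
      ∀ ρ ∈ densityMatrices d, mirrorObj d η G ρt σ ≤ mirrorObj d η G ρt ρ) ∧
    ∀ σ ∈ densityMatrices d,
      (∀ ρ ∈ densityMatrices d, mirrorObj d η G ρt σ ≤ mirrorObj d η G ρt ρ) →
      (σ.PosDef ∧
       ∀ A : Matrix (Fin d) (Fin d) ℂ, A.PosSemidef → A ≠ 0 →
         0 < ((A * σ).trace).re) := by
  refine ⟨?_, fun σ hσ hmin => ?_⟩
  · obtain ⟨σ, hσ, hmin⟩ := exists_minimizer G hρt hρt1 η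
    exact ⟨σ, ⟨hσ, hmin⟩, fun τ hτ => minimizer_unique hρt hρt1 hτ.1 hσ hτ.2 hmin⟩
  · have hσp := posDef_of_minimizer hρt hρt1 hσ hmin
    exact ⟨hσp, fun A hA hA0 => trace_mul_re_pos hA hA0 hσp⟩
end

section
/- Let A be a nonzero d×d Hermitian positive semi-definite complex matrix whose kernel is nontrivial (i.e., rank(A) < d). Then the function ρ ↦ −log tr(Aρ), defined on the set of Hermitian positive definite d×d density matrices, is not Lipschitz continuous with respect to the Frobenius norm: for every constant K ≥ 0 there exist Hermitian positive definite density matrices ρ, σ with |log tr(Aσ) − log tr(Aρ)| > K ‖ρ − σ‖_F. -/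
/-!
Along a segment of density matrices that ends at a pure state supported in `ker A`, the quantity
`tr(Aρ)` tends to zero linearly, so its logarithm is unbounded, while Frobenius distances stay
bounded. Concretely, let `P` be the orthogonal projection onto a line in `ker A`, let `M = 1/d` be
the maximally mixed state, and put `ρ_t = (1 - t) P + t M` for `0 < t ≤ 1`. Then `ρ_t` is a positive
definite density matrix with `tr(A ρ_t) = t · tr(A M)`, hence
`|log tr(A M) - log tr(A ρ_t)| = -log t`, whereas `‖ρ_t - M‖_F = (1 - t) ‖P - M‖_F`.
Taking `t = exp(-(K ‖P - M‖_F + 1))` violates the Lipschitz bound with constant `K`.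
-/

open Matrix
open scoped ComplexOrder

/-- The Frobenius norm `‖X‖_F = √tr(X*X)`. -/
noncomputable def frobNorm (d : ℕ) (X : Matrix (Fin d) (Fin d) ℂ) : ℝ :=
  Real.sqrt (((Xᴴ * X).trace).re)

lemma frobNorm_real_smul (d : ℕ) (r : ℝ) (hr : 0 ≤ r) (X : Matrix (Fin d) (Fin d) ℂ) :
    frobNorm d ((r : ℂ) • X) = r * frobNorm d X := by
  have h : ((((r : ℂ) • X)ᴴ * ((r : ℂ) • X)).trace).re = r ^ 2 * ((Xᴴ * X).trace).re := by
    simp [conjTranspose_smul, trace_smul]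
    ring
  rw [frobNorm, frobNorm, h, Real.sqrt_mul (sq_nonneg r), Real.sqrt_sq hr]

/-- There is a density matrix supported in `ker A`; the witness is the normalized rank-one projection
onto a kernel vector. -/
lemma exists_state_in_ker (d : ℕ) (A : Matrix (Fin d) (Fin d) ℂ) (hrank : A.rank < d) :
    ∃ P : Matrix (Fin d) (Fin d) ℂ, P.PosSemidef ∧ P.trace = 1 ∧ A * P = 0 := by
  obtain ⟨v, hv0, hv⟩ : ∃ v, v ≠ 0 ∧ A *ᵥ v = 0 := by
    apply Matrix.exists_mulVec_eq_zero_iff.mpr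
    by_contra hdet
    have hu : IsUnit A := (Matrix.isUnit_iff_isUnit_det A).mpr (isUnit_iff_ne_zero.mpr hdet)
    have := Matrix.rank_of_isUnit A hu
    simp at this
    omega
  have hpos : 0 < v ⬝ᵥ star v := by
    simpa using Matrix.dotProduct_star_self_pos_iff.mpr hv0
  refine ⟨(v ⬝ᵥ star v)⁻¹ • vecMulVec v (star v), ?_, ?_, ?_⟩
  · exact (Matrix.posSemidef_vecMulVec_self_star v).smul (inv_pos.mpr hpos).le
  · rw [trace_smul, trace_vecMulVec, smul_eq_mul, inv_mul_cancel₀ hpos.ne']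
  · rw [Matrix.mul_smul, Matrix.mul_vecMulVec, hv]
    simp

/-- for a nonzero Hermitian positive semi-definite `A` with
nontrivial kernel (`rank A < d`), the logarithmic loss `ρ ↦ -log tr(Aρ)` is not
Lipschitz on the Hermitian positive definite density matrices with respect to
the Frobenius norm. -/
theorem logLoss_not_lipschitz (d : ℕ) (A : Matrix (Fin d) (Fin d) ℂ)
    (hA : A.PosSemidef) (hA0 : A ≠ 0) (hrank : A.rank < d) :
    ∀ K : ℝ, 0 ≤ K → ∃ ρ σ : Matrix (Fin d) (Fin d) ℂ,
      ρ.PosDef ∧ ρ.trace = 1 ∧ σ.PosDef ∧ σ.trace = 1 ∧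
      K * frobNorm d (ρ - σ) <
        |Real.log (((A * σ).trace).re) - Real.log (((A * ρ).trace).re)| := by
  intro K hK
  obtain ⟨P, hP, hPtr, hAP⟩ := exists_state_in_ker d A hrank
  have hd : (0 : ℝ) < d := by exact_mod_cast (Nat.zero_le _).trans_lt hrank
  have hdC : (0 : ℂ) < (d : ℂ)⁻¹ := by
    rw [inv_pos]; exact_mod_cast hd
  set M : Matrix (Fin d) (Fin d) ℂ := (d : ℂ)⁻¹ • 1 with hM
  have hMpd : M.PosDef := Matrix.PosDef.one.smul hdC
  have hMtr : M.trace = 1 := by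
    rw [hM, trace_smul, trace_one, Fintype.card_fin, smul_eq_mul]
    exact inv_mul_cancel₀ (by exact_mod_cast hd.ne')
  have hc : 0 < ((A * M).trace).re := by
    have h1 : 0 < A.trace := lt_of_le_of_ne hA.trace_nonneg
      (fun h => hA0 (hA.trace_eq_zero_iff.mp h.symm))
    have h2 : 0 < (A * M).trace := by
      rw [hM, Matrix.mul_smul, Matrix.mul_one, trace_smul, smul_eq_mul]
      exact mul_pos hdC h1
    exact (Complex.lt_def.mp h2).1
  set F := frobNorm d (P - M) with hF
  have hF0 : 0 ≤ F := Real.sqrt_nonneg _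
  have hKF : 0 ≤ K * F := mul_nonneg hK hF0
  set t := Real.exp (-(K * F + 1)) with ht
  have ht0 : 0 < t := Real.exp_pos _
  have ht1 : t ≤ 1 := Real.exp_le_one_iff.mpr (by linarith)
  have ht0C : (0 : ℂ) < (t : ℂ) := by exact_mod_cast ht0
  have ht1C : (0 : ℂ) ≤ ((1 - t : ℝ) : ℂ) := by exact_mod_cast sub_nonneg.mpr ht1
  refine ⟨((1 - t : ℝ) : ℂ) • P + (t : ℂ) • M, M, ?_, ?_, hMpd, hMtr, ?_⟩
  · exact Matrix.PosDef.posSemidef_add (hP.smul ht1C) (hMpd.smul ht0C)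
  · rw [trace_add, trace_smul, trace_smul, hPtr, hMtr]
    simp
  · have hdiff : ((1 - t : ℝ) : ℂ) • P + (t : ℂ) • M - M = ((1 - t : ℝ) : ℂ) • (P - M) := by
      push_cast
      module
    have htrace : ((A * (((1 - t : ℝ) : ℂ) • P + (t : ℂ) • M)).trace).re
        = t * ((A * M).trace).re := by
      rw [Matrix.mul_add, Matrix.mul_smul, Matrix.mul_smul, hAP, smul_zero, zero_add, trace_smul,
        smul_eq_mul, Complex.re_ofReal_mul]
    rw [hdiff, frobNorm_real_smul d _ (sub_nonneg.mpr ht1), htrace,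
      Real.log_mul ht0.ne' hc.ne', ht, Real.log_exp, ← ht, ← hF]
    refine lt_of_lt_of_le ?_ (le_abs_self _)
    nlinarith [mul_nonneg hKF ht0.le]
end
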